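/- A set S ⊆ E strongly connects G if and only if S contains every necessary edge of G and, for each unsatisfied edge e of G, S contains some redundant edge that provides a cycle for e. -/

import Mathlib

/-- A set `S` of directed edges strongly connects the vertex set `V`:
for every pair of vertices there is a directed path using only edges of `S`. -/
def StronglyConnects {V : Type*} (S : Set (V × V)) : Prop :=
  ∀ u v : V, Relation.ReflTransGen (fun a b => (a, b) ∈ S) u v

/-- The edges of the closed walk determined by the vertex list `c`
(consecutive pairs, wrapping around from the last vertex to the first). -/
def cycleEdges {V : Type*} (c : List V) : List (V × V) := c.zip (c.rotate 1)

/-- `c` is a directed cycle of the graph with edge set `E`: a nonempty list of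
distinct vertices all of whose consecutive (wrap-around) pairs are edges.
Its length (number of edges) is `c.length`. -/
def IsCycle {V : Type*} (E : Set (V × V)) (c : List V) : Prop :=
  c ≠ [] ∧ c.Nodup ∧ ∀ e ∈ cycleEdges c, e ∈ E

/-- An edge is redundant if deleting it leaves a strongly connected graph. -/
def Redundant {V : Type*} (E : Set (V × V)) (e : V × V) : Prop :=
  e ∈ E ∧ StronglyConnects (E \ {e})

/-- An edge is necessary if deleting it destroys strong connectivity. -/
def Necessary {V : Type*} (E : Set (V × V)) (e : V × V) : Prop :=
  e ∈ E ∧ ¬ StronglyConnects (E \ {e})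

/-- The set of necessary edges. -/
def necessarySet {V : Type*} (E : Set (V × V)) : Set (V × V) :=
  {e | Necessary E e}

/-- An edge `(u, v)` is unsatisfied if there is no directed path from `v`
back to `u` consisting only of necessary edges. -/
def Unsatisfied {V : Type*} (E : Set (V × V)) (e : V × V) : Prop :=
  e ∈ E ∧ ¬ Relation.ReflTransGen (fun a b => Necessary E (a, b)) e.2 e.1

/-- A redundant edge `r` provides a cycle for an unsatisfied edge `(u, v)` if
there is a directed path from `v` to `u` consisting of necessary edges and `r`. -/
def ProvidesCycle {V : Type*} (E : Set (V × V)) (r : V × V) (e : V × V) : Prop :=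
  Relation.ReflTransGen (fun a b => Necessary E (a, b) ∨ (a, b) = r) e.2 e.1

/-- `w` is a cut vertex: deleting `w` disconnects the underlying undirected graph,
i.e. some two vertices distinct from `w` are joined by no undirected path avoiding `w`. -/
def IsCutVertex {V : Type*} (E : Set (V × V)) (w : V) : Prop :=
  ∃ u v : V, u ≠ w ∧ v ≠ w ∧
    ¬ Relation.ReflTransGen
        (fun a b => a ≠ w ∧ b ≠ w ∧ ((a, b) ∈ E ∨ (b, a) ∈ E)) u v

/-!
The right-hand condition makes every edge of `E` reversible by a path in `S`, which gives one
direction. Conversely, let `S` strongly connect the graph and let `(u, v)` be unsatisfied. Since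
cycles have at most three edges, `S` leads from `v` back to `u` by one edge, or by two edges
`(v, w)`, `(w, u)`; the chosen redundant edge exists unless both of these are redundant. In that
case, deleting either edge forces detours which reverse all three edges of the triangle `u v w`,
and the bound on cycle lengths shows that each detour is a single edge. Now no path can leave the
complete triangle at one vertex and return at another, so everything outside hangs at one vertex
of the triangle, which is then a cut vertex.
-/

section

open Relation

variable {V : Type*} {E F S : Set (V × V)}

/-- There is a directed path from `u` to `v` using only edges of `F`. -/
def Reachable (F : Set (V × V)) (u v : V) : Prop :=
  ReflTransGen (fun a b => (a, b) ∈ F) u v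

/-- The edges of `F` that remain when the vertices in `W` are deleted. The vertices of `W` stay in
the type, as isolated vertices. -/
def deleteVerts (F : Set (V × V)) (W : Set V) : Set (V × V) :=
  {e ∈ F | e.1 ∉ W ∧ e.2 ∉ W}

@[simp]
theorem mem_deleteVerts {W : Set V} {a b : V} :
    (a, b) ∈ deleteVerts F W ↔ (a, b) ∈ F ∧ a ∉ W ∧ b ∉ W :=
  Iff.rfl

theorem deleteVerts_subset (W : Set V) : deleteVerts F W ⊆ F :=
  fun _ he => he.1

theorem deleteVerts_mono_left (hFS : F ⊆ S) (W : Set V) : deleteVerts F W ⊆ deleteVerts S W :=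
  fun _ he => ⟨hFS he.1, he.2⟩

theorem deleteVerts_subset_sdiff_singleton {W W' : Set V} {a b : V} (hW : W' ⊆ W)
    (hab : a ∈ W ∨ b ∈ W) : deleteVerts F W ⊆ deleteVerts (F \ {(a, b)}) W' := by
  rintro ⟨y, z⟩ ⟨hyz, hy, hz⟩
  refine ⟨⟨hyz, ?_⟩, fun h => hy (hW h), fun h => hz (hW h)⟩
  rintro ⟨⟩
  exact hab.elim hy hz

theorem deleteVerts_deleteVerts (W W' : Set V) :
    deleteVerts (deleteVerts F W) W' = deleteVerts F (W ∪ W') := by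
  ext ⟨y, z⟩
  simp only [mem_deleteVerts, Set.mem_union, not_or]
  tauto

theorem Reachable.mono {u v : V} (h : Reachable F u v) (hFS : F ⊆ S) : Reachable S u v :=
  ReflTransGen.mono (fun _ _ hab => hFS hab) u v h

theorem Reachable.target_notMem {W : Set V} {u v : V} (h : Reachable (deleteVerts F W) u v)
    (hu : u ∉ W) : v ∉ W := by
  rcases h.cases_tail with rfl | ⟨_, _, hv⟩
  exacts [hu, hv.2.2]

theorem Reachable.source_notMem {W : Set V} {u v : V} (h : Reachable (deleteVerts F W) u v)
    (hv : v ∉ W) : u ∉ W := by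
  rcases h.cases_head with rfl | ⟨_, hu, _⟩
  exacts [hv, hu.2.1]

theorem Reachable.exists_adj_deleteVerts {u v : V} (h : Reachable F u v) (huv : u ≠ v) :
    ∃ x, x ≠ u ∧ (u, x) ∈ F ∧ Reachable (deleteVerts F {u}) x v := by
  induction h with
  | refl => exact absurd rfl huv
  | @tail y v _ hyv ih =>
    by_cases huy : u = y
    · exact ⟨v, huv.symm, huy ▸ hyv, .refl⟩
    · obtain ⟨x, hxu, hux, hxy⟩ := ih huy
      exact ⟨x, hxu, hux, hxy.tail ⟨hyv, Ne.symm huy, huv.symm⟩⟩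

theorem Reachable.avoid_or_reach_first {u v x : V} (h : Reachable F u v) (hux : u ≠ x)
    (hvx : v ≠ x) : Reachable (deleteVerts F {x}) u v ∨ Reachable (deleteVerts F {v}) u x := by
  induction h using ReflTransGen.head_induction_on with
  | refl => exact .inl .refl
  | @head u y huy _ ih =>
    by_cases huv : u = v
    · exact .inl (huv ▸ .refl)
    by_cases hyx : y = x
    · subst hyx
      exact .inr (.single ⟨huy, huv, hvx.symm⟩)
    by_cases hyv : y = v
    · subst hyv
      exact .inl (.single ⟨huy, hux, hvx⟩)
    exact (ih hyx).imp (.head ⟨huy, hux, hyx⟩) (.head ⟨huy, huv, hyv⟩)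

theorem Reachable.avoid_or_reach_last {u v x : V} (h : Reachable F u v) (hux : u ≠ x)
    (hvx : v ≠ x) : Reachable (deleteVerts F {x}) u v ∨ Reachable (deleteVerts F {u}) x v := by
  induction h with
  | refl => exact .inl .refl
  | @tail y v _ hyv ih =>
    by_cases huv : u = v
    · exact .inl (huv ▸ .refl)
    by_cases hyx : y = x
    · subst hyx
      exact .inr (.single ⟨hyv, hux.symm, Ne.symm huv⟩)
    by_cases hyu : y = u
    · subst hyu
      exact .inl (.single ⟨hyv, hux, hvx⟩)
    exact (ih hyx).imp (.tail · ⟨hyv, hyx, hvx⟩) (.tail · ⟨hyv, hyu, Ne.symm huv⟩)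

theorem Reachable.split_of_not_avoid {u v x : V} (h : Reachable F u v) (hux : u ≠ x) (hvx : v ≠ x)
    (havoid : ¬ Reachable (deleteVerts F {x}) u v) :
    Reachable (deleteVerts F {v}) u x ∧ Reachable (deleteVerts F {u}) x v :=
  ⟨(h.avoid_or_reach_first hux hvx).resolve_left havoid,
    (h.avoid_or_reach_last hux hvx).resolve_left havoid⟩

theorem exists_nodup_isChain_of_reflTransGen {r : V → V → Prop} {u v : V}
    (h : ReflTransGen r u v) :
    ∃ l : List V, (u :: l).Nodup ∧ (u :: l).IsChain r ∧ (u :: l).getLast? = some v := by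
  induction h using ReflTransGen.head_induction_on with
  | refl => exact ⟨[], by simp⟩
  | @head u w huw _ ih =>
    obtain ⟨l, hnodup, hchain, hlast⟩ := ih
    by_cases hu : u ∈ w :: l
    · obtain ⟨s, t, hst⟩ := List.append_of_mem hu
      rw [hst] at hnodup hchain hlast
      exact ⟨t, hnodup.of_append_right, hchain.right_of_append, by simpa using hlast⟩
    · exact ⟨w :: l, List.nodup_cons.2 ⟨hu, hnodup⟩, .cons_cons huw hchain, by simpa using hlast⟩

theorem isCycle_cons_iff {a : V} {l : List V} :
    IsCycle E (a :: l) ↔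
      (a :: l).Nodup ∧ (a :: l ++ [a]).IsChain (fun x y => (x, y) ∈ E) := by
  rw [List.isChain_cons_append_singleton_iff_forall₂, List.forall₂_iff_zip]
  simp [IsCycle, cycleEdges]

/-- Every directed cycle has at most three edges. -/
def ShortCycles (E : Set (V × V)) : Prop :=
  ∀ c : List V, IsCycle E c → c.length ≤ 3

theorem ShortCycles.mem_of_reachable_deleteVerts (hE : ShortCycles E) (hFE : F ⊆ E) {p c s : V}
    (hpc : (p, c) ∈ E) (hcs : (c, s) ∈ E) (hne : c ≠ s) (hsp : s ≠ p)
    (h : Reachable (deleteVerts F {c}) s p) : (s, p) ∈ F := by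
  obtain ⟨l, hnodup, hchain, hlast⟩ := exists_nodup_isChain_of_reflTransGen h
  have hcl : c ∉ s :: l := fun hc =>
    hchain.induction (· ≠ c) _ (fun _ _ hab _ => hab.2.2) (fun _ => hne.symm) c hc rfl
  have hcycle : IsCycle E (c :: s :: l) := by
    refine isCycle_cons_iff.2 ⟨List.nodup_cons.2 ⟨hcl, hnodup⟩, .cons_cons hcs ?_⟩
    refine (hchain.imp fun a b hab => hFE hab.1).append (.singleton c) ?_
    simp_all
  have hlength := hE _ hcycle
  match l with
  | [] => simp_all
  | [x] => simp_all
  | _ :: _ :: _ => simp at hlength; omega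

theorem ShortCycles.not_reachable_sdiff (hE : ShortCycles E) {p c s : V} (hpc : (p, c) ∈ E)
    (hcs : (c, s) ∈ E) (hne : c ≠ s) (hsp : s ≠ p) :
    ¬ Reachable (deleteVerts (E \ {(s, p)}) {c}) s p := fun h =>
  (hE.mem_of_reachable_deleteVerts Set.sdiff_subset hpc hcs hne hsp h).2 rfl

theorem ShortCycles.mem_or_exists_of_reachable (hE : ShortCycles E) (hFE : F ⊆ E) {u v : V}
    (huv : (u, v) ∈ E) (hne : u ≠ v) (h : Reachable F v u) :
    (v, u) ∈ F ∨ ∃ w, w ≠ u ∧ w ≠ v ∧ (v, w) ∈ F ∧ (w, u) ∈ F := by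
  obtain ⟨w, hwv, hvw, hwu⟩ := h.exists_adj_deleteVerts hne.symm
  by_cases hw : w = u
  · exact .inl (hw ▸ hvw)
  · exact .inr ⟨w, hw, hwv, hvw,
      hE.mem_of_reachable_deleteVerts hFE huv (hFE hvw) hwv.symm hw hwu⟩

theorem ShortCycles.detours_of_redundant (hE : ShortCycles E) {a b c : V} (hab : a ≠ b)
    (hbc : b ≠ c) (hca : c ≠ a) (hred : Redundant E (a, b)) (ebc : (b, c) ∈ E)
    (eca : (c, a) ∈ E) :
    Reachable (deleteVerts E {b}) a c ∧ Reachable (deleteVerts E {a}) c b := by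
  have hdetour : Reachable (E \ {(a, b)}) a b := hred.2 a b
  have hsplit := hdetour.split_of_not_avoid hca.symm hbc
    (hE.not_reachable_sdiff ebc eca hca hab)
  exact hsplit.imp (.mono · (deleteVerts_mono_left Set.sdiff_subset _))
    (.mono · (deleteVerts_mono_left Set.sdiff_subset _))

theorem ShortCycles.mem_of_detours (hE : ShortCycles E) {u v w : V} (huv : u ≠ v) (hvw : v ≠ w)
    (hwu : w ≠ u) (euv : (u, v) ∈ E) (evw : (v, w) ∈ E) (ewu : (w, u) ∈ E)
    (hP : Reachable (deleteVerts E {w}) v u) (hQ : Reachable (deleteVerts E {v}) u w)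
    (hR : Reachable (deleteVerts E {u}) w v) : (v, u) ∈ E := by
  rcases hE.mem_or_exists_of_reachable (deleteVerts_subset _) euv huv hP with
    hvu | ⟨x, hxu, hxv, ⟨evx, -, (hxw : x ≠ w)⟩, ⟨exu, -⟩⟩
  · exact hvu.1
  -- Some detour must meet `x`: otherwise they combine to a path from `u` to `v` avoiding `x`.
  exfalso
  have hQx : Reachable (deleteVerts (deleteVerts E {v}) {x}) u w := by
    by_contra hmeet
    obtain ⟨-, hxw'⟩ := hQ.split_of_not_avoid hxu.symm hxw.symm hmeet
    rw [deleteVerts_deleteVerts] at hxw'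
    have hvx : (v, x) ∈ deleteVerts (E \ {(v, w)}) {u} := ⟨⟨evx, by simpa⟩, huv.symm, hxu⟩
    exact hE.not_reachable_sdiff ewu euv huv hvw
      (.head hvx (hxw'.mono (deleteVerts_subset_sdiff_singleton (by simp) (.inl (by simp)))))
  have hRx : Reachable (deleteVerts (deleteVerts E {u}) {x}) w v := by
    by_contra hmeet
    obtain ⟨hwx, -⟩ := hR.split_of_not_avoid hxw.symm hxv.symm hmeet
    rw [deleteVerts_deleteVerts] at hwx
    have hxu' : (x, u) ∈ deleteVerts (E \ {(w, u)}) {v} := ⟨⟨exu, by simpa⟩, hxv, huv⟩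
    exact hE.not_reachable_sdiff euv evw hvw hwu
      (.tail (hwx.mono (deleteVerts_subset_sdiff_singleton (by simp) (.inr (by simp)))) hxu')
  rw [deleteVerts_deleteVerts] at hQx hRx
  exact hE.not_reachable_sdiff evx exu hxu huv
    ((hQx.mono (deleteVerts_subset_sdiff_singleton (by simp) (.inr (by simp)))).trans
      (hRx.mono (deleteVerts_subset_sdiff_singleton (by simp) (.inl (by simp)))))

/-- No directed path outside `T` joins two different vertices of `T`. -/
def Earless (E : Set (V × V)) (T : Set V) : Prop :=
  ∀ ⦃a⦄, a ∈ T → ∀ ⦃b⦄, b ∈ T → ∀ ⦃x⦄, Reachable (deleteVerts E (T \ {a})) a x →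
    Reachable (deleteVerts E (T \ {b})) x b → a = b

theorem ShortCycles.earless_of_clique (hE : ShortCycles E) {T : Set V}
    (hT : T.Pairwise fun a b => (a, b) ∈ E) (hcard : 2 < T.encard) : Earless E T := by
  intro a ha b hb x hax hxb
  by_contra hab
  obtain ⟨c, hc, hcab⟩ : ∃ c ∈ T, c ∉ ({a, b} : Set V) := by
    by_contra! hsub
    exact hcard.not_ge ((Set.encard_le_encard hsub).trans_eq (Set.encard_pair hab))
  obtain ⟨hca, hcb⟩ : c ≠ a ∧ c ≠ b := by simpa using hcab
  refine hE.not_reachable_sdiff (hT hb hc hcb.symm) (hT hc ha hca) hca hab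
    (ReflTransGen.trans (hax.mono ?_) (hxb.mono ?_))
  · exact deleteVerts_subset_sdiff_singleton (by simp [hc, hca]) (.inr ⟨hb, Ne.symm hab⟩)
  · exact deleteVerts_subset_sdiff_singleton (by simp [hc, hcb]) (.inl ⟨ha, hab⟩)

/-- Outside `T` except at `a`, the vertex `x` can be reached from `a` and can reach `a`. -/
def HangsAt (E : Set (V × V)) (T : Set V) (a x : V) : Prop :=
  Reachable (deleteVerts E (T \ {a})) a x ∧ Reachable (deleteVerts E (T \ {a})) x a

theorem StronglyConnects.exists_mem_reachable (hconn : StronglyConnects E) {T : Set V}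
    (hT : T.Nonempty) (x : V) : ∃ a ∈ T, Reachable (deleteVerts E (T \ {a})) a x := by
  obtain ⟨t, ht⟩ := hT
  induction hconn t x with
  | refl => exact ⟨t, ht, .refl⟩
  | @tail y x _ hyx ih =>
    by_cases hx : x ∈ T
    · exact ⟨x, hx, .refl⟩
    obtain ⟨a, ha, hay⟩ := ih
    exact ⟨a, ha, hay.tail ⟨hyx, hay.target_notMem (by simp), by simp [hx]⟩⟩

theorem StronglyConnects.exists_reachable_mem (hconn : StronglyConnects E) {T : Set V}
    (hT : T.Nonempty) (x : V) : ∃ a ∈ T, Reachable (deleteVerts E (T \ {a})) x a := by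
  obtain ⟨t, ht⟩ := hT
  induction hconn x t using ReflTransGen.head_induction_on with
  | refl => exact ⟨t, ht, .refl⟩
  | @head x y hxy _ ih =>
    by_cases hx : x ∈ T
    · exact ⟨x, hx, .refl⟩
    obtain ⟨a, ha, hya⟩ := ih
    exact ⟨a, ha, hya.head ⟨hxy, by simp [hx], hya.source_notMem (by simp)⟩⟩

theorem Earless.exists_hangsAt {T : Set V} (hear : Earless E T) (hconn : StronglyConnects E)
    (hT : T.Nonempty) (x : V) : ∃ a ∈ T, HangsAt E T a x := by
  obtain ⟨a, ha, hax⟩ := hconn.exists_mem_reachable hT x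
  obtain ⟨b, hb, hxb⟩ := hconn.exists_reachable_mem hT x
  obtain rfl := hear ha hb hax hxb
  exact ⟨a, ha, hax, hxb⟩

theorem Earless.hangsAt_of_adj {T : Set V} (hear : Earless E T) (hconn : StronglyConnects E)
    {a x y : V} (ha : a ∈ T) (hx : x ∉ T) (hax : HangsAt E T a x)
    (hxy : (x, y) ∈ E ∨ (y, x) ∈ E) (hya : y ≠ a) : y ∉ T ∧ HangsAt E T a y := by
  have hyT : y ∉ T := fun hy => by
    rcases hxy with hxy | hyx
    · exact hya.symm (hear ha hy hax.1 (.single ⟨hxy, by simp [hx], by simp⟩))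
    · exact hya (hear hy ha (.single ⟨hyx, by simp, by simp [hx]⟩) hax.2)
  obtain ⟨b, hb, hby⟩ := hear.exists_hangsAt hconn ⟨a, ha⟩ y
  suffices a = b from ⟨hyT, this ▸ hby⟩
  rcases hxy with hxy | hyx
  · exact hear ha hb (hax.1.tail ⟨hxy, by simp [hx], by simp [hyT]⟩) hby.2
  · exact (hear hb ha hby.1 (hax.2.head ⟨hyx, by simp [hyT], by simp [hx]⟩)).symm

theorem Earless.exists_isCutVertex {T : Set V} (hear : Earless E T) (hconn : StronglyConnects E)
    (hT : T.Nontrivial) (hTV : T ≠ Set.univ) : ∃ a ∈ T, IsCutVertex E a := by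
  obtain ⟨z, hz⟩ := (Set.ne_univ_iff_exists_notMem T).1 hTV
  obtain ⟨a, ha, haz⟩ := hear.exists_hangsAt hconn hT.nonempty z
  obtain ⟨t, ht, hta⟩ := hT.exists_ne a
  refine ⟨a, ha, z, t, fun h => hz (h ▸ ha), hta, fun hpath => ?_⟩
  suffices t ∉ T ∧ HangsAt E T a t from this.1 ht
  clear ht hta
  induction hpath with
  | refl => exact ⟨hz, haz⟩
  | tail _ hxy ih => exact hear.hangsAt_of_adj hconn ha ih.1 ih.2 hxy.2.2 hxy.2.1

theorem ShortCycles.eq_univ_of_clique (hE : ShortCycles E) (hconn : StronglyConnects E)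
    (hcut : ∀ w : V, ¬ IsCutVertex E w) {T : Set V} (hT : T.Pairwise fun a b => (a, b) ∈ E)
    (hcard : 2 < T.encard) : T = Set.univ := by
  by_contra hTV
  have hT2 : T.Nontrivial := Set.one_lt_encard_iff_nontrivial.1 (lt_trans (by norm_num) hcard)
  obtain ⟨a, -, ha⟩ :=
    (hE.earless_of_clique hT hcard).exists_isCutVertex hconn hT2 hTV
  exact hcut a ha

theorem ShortCycles.not_redundant_of_triangle (hE : ShortCycles E) (hconn : StronglyConnects E)
    (hcut : ∀ w : V, ¬ IsCutVertex E w) (hcard : ENat.card V ≠ 3) {u v w : V} (huv : u ≠ v)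
    (hvw : v ≠ w) (hwu : w ≠ u) (euv : (u, v) ∈ E) (hrvw : Redundant E (v, w))
    (ewu : (w, u) ∈ E) : ¬ Redundant E (w, u) := by
  intro hrwu
  have evw := hrvw.1
  obtain ⟨hvu, huw⟩ := hE.detours_of_redundant hvw hwu huv hrvw ewu euv
  obtain ⟨hwv, -⟩ := hE.detours_of_redundant hwu huv hvw hrwu euv evw
  have evu := hE.mem_of_detours huv hvw hwu euv evw ewu hvu huw hwv
  have ewv := hE.mem_of_detours hvw hwu huv evw ewu euv hwv hvu huw
  have euw := hE.mem_of_detours hwu huv hvw ewu euv evw huw hwv hvu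
  have hT3 : ({u, v, w} : Set V).encard = 3 :=
    Set.encard_eq_three.2 ⟨u, v, w, huv, hwu.symm, hvw, rfl⟩
  have hclique : ({u, v, w} : Set V).Pairwise fun a b => (a, b) ∈ E := by
    simp [Set.pairwise_insert, *]
  have huniv := hE.eq_univ_of_clique hconn hcut hclique (hT3 ▸ by norm_num)
  exact hcard (by rw [← Set.encard_univ, ← huniv, hT3])

theorem necessary_or_redundant {e : V × V} (he : e ∈ E) : Necessary E e ∨ Redundant E e :=
  (em (StronglyConnects (E \ {e}))).symm.imp (⟨he, ·⟩) (⟨he, ·⟩)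

theorem StronglyConnects.necessarySet_subset (hS : StronglyConnects S) (hSE : S ⊆ E) :
    necessarySet E ⊆ S := by
  rintro e ⟨-, hdisc⟩
  by_contra heS
  exact hdisc fun a b => Reachable.mono (hS a b) (Set.subset_sdiff_singleton hSE heS)

theorem ShortCycles.exists_providesCycle (hE : ShortCycles E) (hconn : StronglyConnects E)
    (hcut : ∀ w : V, ¬ IsCutVertex E w) (hcard : ENat.card V ≠ 3) (hSE : S ⊆ E)
    (hS : StronglyConnects S) {e : V × V} (he : Unsatisfied E e) :
    ∃ r ∈ S, Redundant E r ∧ ProvidesCycle E r e := by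
  obtain ⟨u, v⟩ := e
  obtain ⟨huv, hunsat⟩ := he
  have hne : u ≠ v := by
    rintro rfl
    exact hunsat .refl
  rcases hE.mem_or_exists_of_reachable hSE huv hne (hS v u) with
    hvu | ⟨w, hwu, hwv, hvw, hwu'⟩
  · rcases necessary_or_redundant (hSE hvu) with hn | hr
    · exact absurd (.single hn) hunsat
    · exact ⟨_, hvu, hr, .single (.inr rfl)⟩
  · rcases necessary_or_redundant (hSE hvw) with hn₁ | hr₁ <;>
      rcases necessary_or_redundant (hSE hwu') with hn₂ | hr₂
    · exact absurd (.head hn₁ (.single hn₂)) hunsat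
    · exact ⟨_, hwu', hr₂, .head (.inl hn₁) (.single (.inr rfl))⟩
    · exact ⟨_, hvw, hr₁, .head (.inr rfl) (.single (.inl hn₂))⟩
    · exact absurd hr₂
        (hE.not_redundant_of_triangle hconn hcut hcard hne hwv.symm hwu huv hr₁ (hSE hwu'))

theorem StronglyConnects.of_forall_reachable (hconn : StronglyConnects E)
    (hrev : ∀ a b, (a, b) ∈ E → Reachable S b a) : StronglyConnects S := by
  intro a b
  induction hconn b a with
  | refl => exact .refl
  | tail _ hbc ih => exact (hrev _ _ hbc).trans ih

theorem reachable_of_providesCycle (hN : necessarySet E ⊆ S)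
    (hU : ∀ e, Unsatisfied E e → ∃ r ∈ S, ProvidesCycle E r e) {a b : V} (hab : (a, b) ∈ E) :
    Reachable S b a := by
  by_cases hsat : Reachable (necessarySet E) b a
  · exact hsat.mono hN
  · obtain ⟨r, hr, hcycle⟩ := hU (a, b) ⟨hab, hsat⟩
    have hba : Reachable (necessarySet E ∪ {r}) b a := hcycle
    exact hba.mono (Set.union_subset hN (Set.singleton_subset_iff.2 hr))

end

theorem scss_characterization_general {V : Type*} (E : Set (V × V))
    (hconn : StronglyConnects E)
    (hcyc : ∀ c : List V, IsCycle E c → c.length ≤ 3)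
    (hcard : ENat.card V ≠ 3)
    (hcut : ∀ w : V, ¬ IsCutVertex E w)
    (S : Set (V × V)) (hS : S ⊆ E) :
    StronglyConnects S ↔
      (necessarySet E ⊆ S ∧
        ∀ e : V × V, Unsatisfied E e →
          ∃ r : V × V, r ∈ S ∧ Redundant E r ∧ ProvidesCycle E r e) := by
  have hE : ShortCycles E := hcyc
  constructor
  · intro hSconn
    exact ⟨hSconn.necessarySet_subset hS, fun e he =>
      hE.exists_providesCycle hconn hcut hcard hS hSconn he⟩
  · rintro ⟨hN, hU⟩
    refine hconn.of_forall_reachable fun a b hab => reachable_of_providesCycle hN ?_ hab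
    exact fun e he => (hU e he).imp fun r hr => ⟨hr.1, hr.2.2⟩

/-- A set `S ⊆ E` strongly connects `G` iff it contains every
necessary edge and, for each unsatisfied edge, some redundant edge of `S`
provides a cycle for it. -/
theorem scss_characterization {V : Type*} [Fintype V] (E : Set (V × V))
    (hconn : StronglyConnects E)
    (hcyc : ∀ c : List V, IsCycle E c → c.length ≤ 3)
    (hcard : 4 ≤ Fintype.card V)
    (hcut : ∀ w : V, ¬ IsCutVertex E w)
    (S : Set (V × V)) (hS : S ⊆ E) :
    StronglyConnects S ↔
      (necessarySet E ⊆ S ∧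
        ∀ e : V × V, Unsatisfied E e →
          ∃ r : V × V, r ∈ S ∧ Redundant E r ∧ ProvidesCycle E r e) :=
  scss_characterization_general E hconn hcyc
    (by rw [ENat.card_eq_coe_fintype_card]; exact_mod_cast (by lia : Fintype.card V ≠ 3)) hcut S hS
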